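/- A d-dimensional (0,1)-matrix A of order 2 is extremal if and only if the Boolean function f on d variables whose value table is A is both selfdual and threshold. -/

import Mathlib

open Finset

/-- The sum of the entries of `k` over the hyperplane `Γ_{i,j}`. -/
def hypSum {d n : ℕ} (k : (Fin d → Fin n) → ℝ) (i : Fin d) (j : Fin n) : ℝ :=
  ∑ α ∈ Finset.univ.filter (fun α : Fin d → Fin n => α i = j), k α

/-- `k` is a polyplex of weight `W` in the `d`-dimensional (0,1)-matrix `A` of order `n`. -/
def IsPolyplex {d n : ℕ} (A : (Fin d → Fin n) → Bool) (k : (Fin d → Fin n) → ℝ) (W : ℝ) : Prop :=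
  (∀ α, 0 ≤ k α) ∧ (∀ α, A α = false → k α = 0) ∧
  (∀ i j, hypSum k i j ≤ 1) ∧ (∑ α, k α) = W

/-- `k` is a polydiagonal in `A`: a nonnegative weighting of the support whose sum over
every hyperplane equals `1`. -/
def IsPolydiagonal {d n : ℕ} (A : (Fin d → Fin n) → Bool) (k : (Fin d → Fin n) → ℝ) : Prop :=
  (∀ α, 0 ≤ k α) ∧ (∀ α, A α = false → k α = 0) ∧ (∀ i j, hypSum k i j = 1)

def HasPolydiagonal {d n : ℕ} (A : (Fin d → Fin n) → Bool) : Prop :=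
  ∃ k, IsPolydiagonal A k

/-- The matrix obtained from `A` by additionally setting the entry at `β` to `1`. -/
def addEntry {d n : ℕ} (A : (Fin d → Fin n) → Bool) (β : Fin d → Fin n) :
    (Fin d → Fin n) → Bool :=
  fun α => if α = β then true else A α

/-- `A` is extremal: it has no polydiagonal, and adding any entry creates one. -/
def IsExtremal {d n : ℕ} (A : (Fin d → Fin n) → Bool) : Prop :=
  ¬ HasPolydiagonal A ∧ ∀ β, A β = false → HasPolydiagonal (addEntry A β)

/-- `Λ` is a hyperplane cover of `A`. -/
def IsCover {d n : ℕ} (A : (Fin d → Fin n) → Bool) (Λ : Fin d → Fin n → ℝ) : Prop :=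
  (∀ i j, 0 ≤ Λ i j) ∧ ∀ α, A α = true → 1 ≤ ∑ i, Λ i (α i)

/-- The weight of a hyperplane cover. -/
def coverWeight {d n : ℕ} (Λ : Fin d → Fin n → ℝ) : ℝ := ∑ i, ∑ j, Λ i j

/-- `Λ` is an optimal hyperplane cover of `A`: a cover of minimum weight. -/
def IsOptimalCover {d n : ℕ} (A : (Fin d → Fin n) → Bool) (Λ : Fin d → Fin n → ℝ) : Prop :=
  IsCover A Λ ∧ ∀ Λ', IsCover A Λ' → coverWeight Λ ≤ coverWeight Λ'

/-- `A` is a threshold matrix. -/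
def IsThreshold {d n : ℕ} (A : (Fin d → Fin n) → Bool) : Prop :=
  ∃ Λ : Fin d → Fin n → ℝ, (∀ i j, 0 ≤ Λ i j) ∧
    ∀ α, (A α = true ↔ 1 ≤ ∑ i, Λ i (α i))

/-- `A` and `B` are equivalent: `B` is obtained from `A` by permuting directions and
permuting parallel hyperplanes, i.e. `B(α) = A(β)` where `β (π i) = σ i (α i)`. -/
def MatEquiv {d n : ℕ} (A B : (Fin d → Fin n) → Bool) : Prop :=
  ∃ (π : Equiv.Perm (Fin d)) (σ : Fin d → Equiv.Perm (Fin n)),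
    ∀ α, B α = A (fun j => σ (π.symm j) (α (π.symm j)))

/-- The rate of the hyperplane `Γ_{i,j}` of `A`: the number of ones it contains. -/
def rate {d n : ℕ} (A : (Fin d → Fin n) → Bool) (i : Fin d) (j : Fin n) : ℕ :=
  (Finset.univ.filter (fun α : Fin d → Fin n => A α = true ∧ α i = j)).card

/-- The profile of `A`: the multiset of the rates of all its `d·n` hyperplanes. -/
def profile {d n : ℕ} (A : (Fin d → Fin n) → Bool) : Multiset ℕ :=
  (Finset.univ : Finset (Fin d × Fin n)).val.map (fun p => rate A p.1 p.2)


/-- A Boolean function (matrix of order 2) is selfdual if complementing the input complements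
the output. -/
def SelfDual {d : ℕ} (A : (Fin d → Fin 2) → Bool) : Prop :=
  ∀ α : Fin d → Fin 2, A (fun i => if α i = 0 then 1 else 0) = ! A α

/-- A is a threshold Boolean function: there are weights μ and a threshold T with
A x = 1 iff the weighted sum of the variables is at least T. -/
def IsThresholdBF {d : ℕ} (A : (Fin d → Fin 2) → Bool) : Prop :=
  ∃ (μ : Fin d → ℝ) (T : ℝ), ∀ α, (A α = true ↔ T ≤ ∑ i, μ i * ((α i : ℕ) : ℝ))

/-!
Give each hyperplane `Γ_{i,j}` a real weight `Λ i j`, and let the excess of an index be `n` times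
the total weight of the `d` hyperplanes through it, minus the weight of `Λ`. Averaged against a
polydiagonal the excess vanishes, and by Gordan's theorem of the alternative a matrix without a
polydiagonal has a `Λ` whose excess is positive on the whole support. If the matrix is extremal of
order at least two, this excess is negative off the support: a polydiagonal created by adding an
entry `β` of nonnegative excess would be concentrated at `β`.

In order two every hyperplane contains exactly one of two antipodal indices, so the excess is odd
under `α ↦ antipode α`. Hence a matrix separated by the sign of an excess is selfdual, and it is
threshold because the excess is an affine function of the index. Conversely, for a selfdual
threshold function exactly one of two antipodal indices reaches the threshold, so the excess of the
defining linear form separates. Adding an entry `β` completes the antipodal pair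
`{β, antipode β}`, which carries a polydiagonal.
-/

section Gordan

variable {ι E : Type*} [Fintype ι] [AddCommGroup E] [Module ℝ E]

theorem exists_sum_smul_eq_of_mem_convexHull_image {v : ι → E} {s : Set ι} {x : E}
    (hx : x ∈ convexHull ℝ (v '' s)) :
    ∃ c ∈ stdSimplex ℝ ι, (∀ i ∉ s, c i = 0) ∧ ∑ i, c i • v i = x := by
  classical
  have image_single : v '' s = Fintype.linearCombination ℝ v '' ((Pi.single · 1) '' s) := by
    simp [Set.image_image]
  rw [image_single, ← LinearMap.image_convexHull] at hx
  obtain ⟨c, hc, rfl⟩ := hx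
  have single_mem : (Pi.single · 1) '' s ⊆ stdSimplex ℝ ι := by
    rintro _ ⟨i, -, rfl⟩
    exact single_mem_stdSimplex ℝ i
  have single_apply : ∀ i ∉ s, (Pi.single · 1) '' s ⊆ {c : ι → ℝ | c i = 0} := by
    rintro i hi _ ⟨j, hj, rfl⟩
    exact Pi.single_eq_of_ne (by grind) 1
  refine ⟨c, convexHull_min single_mem (convex_stdSimplex ℝ ι) hc, fun i hi => ?_, rfl⟩
  exact convexHull_min (single_apply i hi)
    (convex_hyperplane (LinearMap.proj (R := ℝ) i).isLinear 0) hc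

theorem exists_forall_pos_or_exists_sum_smul_eq_zero [TopologicalSpace E]
    [IsTopologicalAddGroup E] [ContinuousSMul ℝ E] [LocallyConvexSpace ℝ E] [T2Space E]
    (v : ι → E) (s : Set ι) :
    (∃ f : StrongDual ℝ E, ∀ i ∈ s, 0 < f (v i)) ∨
      ∃ c ∈ stdSimplex ℝ ι, (∀ i ∉ s, c i = 0) ∧ ∑ i, c i • v i = 0 := by
  by_cases h0 : (0 : E) ∈ convexHull ℝ (v '' s)
  · exact .inr (exists_sum_smul_eq_of_mem_convexHull_image h0)
  · obtain ⟨f, u, hu, hf⟩ := geometric_hahn_banach_point_closed (convex_convexHull ℝ _)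
      ((s.toFinite.image v).isClosed_convexHull ℝ) h0
    rw [map_zero] at hu
    exact .inl ⟨f, fun i hi => hu.trans (hf _ (subset_convexHull ℝ _ (Set.mem_image_of_mem v hi)))⟩

end Gordan

section HyperplaneSums

variable {d n : ℕ} (k : (Fin d → Fin n) → ℝ)

theorem sum_hypSum (i : Fin d) : ∑ j, hypSum k i j = ∑ α, k α := by
  simp only [hypSum, Finset.sum_fiberwise]

theorem hypSum_eq_sum_mul_ite (i : Fin d) (j : Fin n) :
    hypSum k i j = ∑ α, k α * if α i = j then 1 else 0 := by
  simp [hypSum, Finset.sum_filter]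

theorem hypSum_const_mul (c : ℝ) (i : Fin d) (j : Fin n) :
    hypSum (fun α => c * k α) i j = c * hypSum k i j :=
  (Finset.mul_sum _ _ _).symm

end HyperplaneSums

/-- The total weight that `Λ` gives to the hyperplanes through the index `α`. -/
def indexWeight {d n : ℕ} (Λ : Fin d → Fin n → ℝ) (α : Fin d → Fin n) : ℝ :=
  ∑ i, Λ i (α i)

/-- The excess of `Λ` at the index `α`: the amount, scaled by `n`, by which `indexWeight Λ α`
exceeds its average `coverWeight Λ / n` over all indices. The weights in `Λ` may be negative. -/
def excess {d n : ℕ} (Λ : Fin d → Fin n → ℝ) (α : Fin d → Fin n) : ℝ :=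
  n * indexWeight Λ α - coverWeight Λ

/-- `Λ` separates the ones of `A` from its zeros by the sign of the excess, which vanishes at no
index. -/
def Separates {d n : ℕ} (Λ : Fin d → Fin n → ℝ) (A : (Fin d → Fin n) → Bool) : Prop :=
  (∀ α, A α = true → 0 < excess Λ α) ∧ ∀ α, A α = false → excess Λ α < 0

/-- The vector which, paired with a weighting `Λ` of the hyperplanes, gives `excess Λ α`: it is `n`
times the incidence vector of `α` with the hyperplanes, minus the all-ones vector. -/
def deviation {d n : ℕ} (α : Fin d → Fin n) : Fin d × Fin n → ℝ :=
  fun p => n * (if α p.1 = p.2 then 1 else 0) - 1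

section Excess

variable {d n : ℕ}

theorem sum_deviation_mul (Λ : Fin d → Fin n → ℝ) (α : Fin d → Fin n) :
    ∑ p, deviation α p * Λ p.1 p.2 = excess Λ α := by
  simp [deviation, excess, indexWeight, coverWeight, Fintype.sum_prod_type, sub_mul,
    Finset.sum_sub_distrib, Finset.mul_sum]

theorem exists_excess_eq_apply_deviation (f : (Fin d × Fin n → ℝ) →ₗ[ℝ] ℝ) :
    ∃ Λ : Fin d → Fin n → ℝ, ∀ α, excess Λ α = f (deviation α) := by
  refine ⟨fun i j => f fun p => if (i, j) = p then 1 else 0, fun α => ?_⟩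
  simp only [← sum_deviation_mul, f.pi_apply_eq_sum_univ (deviation α), smul_eq_mul]

theorem sum_mul_deviation (k : (Fin d → Fin n) → ℝ) (i : Fin d) (j : Fin n) :
    ∑ α, k α * deviation α (i, j) = n * hypSum k i j - ∑ α, k α := by
  simp only [deviation, hypSum_eq_sum_mul_ite, mul_sub, mul_one, Finset.sum_sub_distrib,
    Finset.mul_sum, mul_left_comm]

theorem Separates.eq_true_iff_excess_nonneg {A : (Fin d → Fin n) → Bool}
    {Λ : Fin d → Fin n → ℝ} (h : Separates Λ A) (α : Fin d → Fin n) :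
    A α = true ↔ 0 ≤ excess Λ α := by
  cases hα : A α with
  | false => simpa using h.2 α hα
  | true => simpa using (h.1 α hα).le

theorem Separates.dim_ne_zero [NeZero n] {A : (Fin d → Fin n) → Bool}
    {Λ : Fin d → Fin n → ℝ} (h : Separates Λ A) : d ≠ 0 := by
  rintro rfl
  have excess_eq_zero : excess Λ 0 = 0 := by simp [excess, indexWeight, coverWeight]
  cases hA : A 0 with
  | false => exact (h.2 0 hA).ne excess_eq_zero
  | true => exact (h.1 0 hA).ne' excess_eq_zero

end Excess

section Polydiagonals

variable {d n : ℕ} {A : (Fin d → Fin n) → Bool} {k : (Fin d → Fin n) → ℝ}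
  {Λ : Fin d → Fin n → ℝ}

theorem IsPolydiagonal.sum_eq (hk : IsPolydiagonal A k) (i : Fin d) : ∑ α, k α = n := by
  simp [← sum_hypSum k i, hk.2.2]

theorem IsPolydiagonal.exists_ne_zero (hk : IsPolydiagonal A k) (i : Fin d) (j : Fin n) :
    ∃ α, α i = j ∧ k α ≠ 0 := by
  have hsum : hypSum k i j ≠ 0 := by simp [hk.2.2 i j]
  obtain ⟨α, hα, hkα⟩ := Finset.exists_ne_zero_of_sum_ne_zero hsum
  exact ⟨α, (Finset.mem_filter.1 hα).2, hkα⟩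

theorem IsPolydiagonal.sum_mul_excess (hk : IsPolydiagonal A k) (Λ : Fin d → Fin n → ℝ) :
    ∑ α, k α * excess Λ α = 0 := by
  have sum_deviation (p : Fin d × Fin n) : ∑ α, k α * deviation α p = 0 := by
    rw [sum_mul_deviation, hk.2.2, hk.sum_eq p.1, mul_one, sub_self]
  calc ∑ α, k α * excess Λ α
      = ∑ p, (∑ α, k α * deviation α p) * Λ p.1 p.2 := by
        simp only [← sum_deviation_mul, Finset.mul_sum, Finset.sum_mul, mul_assoc]
        exact Finset.sum_comm
    _ = 0 := by simp [sum_deviation]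

theorem IsPolydiagonal.excess_eq_zero (hk : IsPolydiagonal A k)
    (hΛ : ∀ α, A α = true → 0 ≤ excess Λ α) {α : Fin d → Fin n} (hα : k α ≠ 0) :
    excess Λ α = 0 := by
  have mul_excess_nonneg (β : Fin d → Fin n) : 0 ≤ k β * excess Λ β := by
    cases hβ : A β with
    | false => simp [hk.2.1 β hβ]
    | true => exact mul_nonneg (hk.1 β) (hΛ β hβ)
  have mul_excess_eq_zero := (Finset.sum_eq_zero_iff_of_nonneg fun β _ => mul_excess_nonneg β).1
    (hk.sum_mul_excess Λ) α (Finset.mem_univ α)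
  exact (mul_eq_zero.1 mul_excess_eq_zero).resolve_left hα

theorem hasPolydiagonal_of_dim_eq_zero (A : (Fin d → Fin n) → Bool) (hd : d = 0) :
    HasPolydiagonal A := by
  subst hd
  exact ⟨0, fun _ => le_rfl, fun _ _ => rfl, fun i => i.elim0⟩

theorem exists_forall_excess_pos_of_not_hasPolydiagonal (hA : ¬ HasPolydiagonal A) :
    ∃ Λ : Fin d → Fin n → ℝ, ∀ α, A α = true → 0 < excess Λ α := by
  obtain ⟨f, hf⟩ | ⟨c, ⟨hc_nonneg, hc_sum⟩, hc_supp, hc_dev⟩ :=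
    exists_forall_pos_or_exists_sum_smul_eq_zero (deviation (d := d) (n := n)) {α | A α = true}
  · obtain ⟨Λ, hΛ⟩ := exists_excess_eq_apply_deviation f.toLinearMap
    exact ⟨Λ, fun α hα => (hf α hα).trans_eq (hΛ α).symm⟩
  · refine absurd ⟨fun α => n * c α, fun α => mul_nonneg n.cast_nonneg (hc_nonneg α),
      fun α hα => by simp [hc_supp α (by simp [hα])], fun i j => ?_⟩ hA
    have hdev : ∑ α, c α * deviation α (i, j) = 0 := by simpa using congrFun hc_dev (i, j)
    rw [sum_mul_deviation, hc_sum] at hdev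
    rw [hypSum_const_mul, sub_eq_zero.1 hdev]

theorem excess_neg_of_hasPolydiagonal_addEntry [Nontrivial (Fin n)] (hd : d ≠ 0)
    (hΛ : ∀ α, A α = true → 0 < excess Λ α) {β : Fin d → Fin n}
    (hβ : HasPolydiagonal (addEntry A β)) : excess Λ β < 0 := by
  by_contra! excess_nonneg
  obtain ⟨k, hk⟩ := hβ
  have hΛ_addEntry : ∀ α, addEntry A β α = true → 0 ≤ excess Λ α := by
    intro α hα
    by_cases hαβ : α = β
    · rwa [hαβ]
    · exact (hΛ α (by simpa [addEntry, hαβ] using hα)).le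
  have concentrated (α : Fin d → Fin n) (hα : k α ≠ 0) : α = β := by
    by_contra hαβ
    have hAα : A α = true := by
      by_contra hAα
      exact hα (hk.2.1 α (by simpa [addEntry, hαβ] using hAα))
    exact (hΛ α hAα).ne' (hk.excess_eq_zero hΛ_addEntry hα)
  let i : Fin d := ⟨0, Nat.pos_of_ne_zero hd⟩
  obtain ⟨j, hj⟩ := exists_ne (β i)
  obtain ⟨α, hαi, hα⟩ := hk.exists_ne_zero i j
  exact hj (hαi ▸ congrFun (concentrated α hα) i)

theorem IsExtremal.exists_separates [Nontrivial (Fin n)] (hA : IsExtremal A) :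
    ∃ Λ, Separates Λ A := by
  obtain ⟨Λ, hΛ⟩ := exists_forall_excess_pos_of_not_hasPolydiagonal hA.1
  have hd : d ≠ 0 := mt (hasPolydiagonal_of_dim_eq_zero A) hA.1
  exact ⟨Λ, hΛ, fun β hβ => excess_neg_of_hasPolydiagonal_addEntry hd hΛ (hA.2 β hβ)⟩

theorem Separates.not_hasPolydiagonal [NeZero n] (h : Separates Λ A) : ¬ HasPolydiagonal A := by
  rintro ⟨k, hk⟩
  obtain ⟨α, -, hα⟩ := hk.exists_ne_zero ⟨0, Nat.pos_of_ne_zero h.dim_ne_zero⟩ 0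
  have excess_eq_zero := hk.excess_eq_zero (fun β hβ => (h.1 β hβ).le) hα
  have hAα : A α = true := (h.eq_true_iff_excess_nonneg α).2 excess_eq_zero.ge
  exact (h.1 α hAα).ne' excess_eq_zero

end Polydiagonals

/-- The coordinatewise complement of an index of order two. -/
def antipode {d : ℕ} (α : Fin d → Fin 2) : Fin d → Fin 2 :=
  fun i => if α i = 0 then 1 else 0

section OrderTwo

variable {d : ℕ} {A : (Fin d → Fin 2) → Bool} {Λ : Fin d → Fin 2 → ℝ}

theorem indexWeight_add_indexWeight_antipode (Λ : Fin d → Fin 2 → ℝ) (α : Fin d → Fin 2) :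
    indexWeight Λ α + indexWeight Λ (antipode α) = coverWeight Λ := by
  simp only [indexWeight, coverWeight, antipode, ← Finset.sum_add_distrib, Fin.sum_univ_two]
  refine Finset.sum_congr rfl fun i _ => ?_
  obtain hi | hi : α i = 0 ∨ α i = 1 := by omega
  · simp [hi]
  · simp [hi, add_comm]

theorem excess_eq_indexWeight_sub (Λ : Fin d → Fin 2 → ℝ) (α : Fin d → Fin 2) :
    excess Λ α = indexWeight Λ α - indexWeight Λ (antipode α) := by
  rw [excess, ← indexWeight_add_indexWeight_antipode Λ α]
  push_cast
  ring

theorem antipode_antipode (α : Fin d → Fin 2) : antipode (antipode α) = α := by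
  funext i
  simp only [antipode]
  grind

theorem excess_antipode (Λ : Fin d → Fin 2 → ℝ) (α : Fin d → Fin 2) :
    excess Λ (antipode α) = -excess Λ α := by
  rw [excess_eq_indexWeight_sub, excess_eq_indexWeight_sub, antipode_antipode, neg_sub]

theorem Separates.selfDual (h : Separates Λ A) : SelfDual A := by
  intro α
  change A (antipode α) = !A α
  cases hα : A α with
  | false =>
    have := h.2 α hα
    rw [Bool.not_false, h.eq_true_iff_excess_nonneg, excess_antipode]
    linarith
  | true =>
    have := h.1 α hα
    rw [Bool.not_true, ← Bool.not_eq_true, h.eq_true_iff_excess_nonneg, excess_antipode]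
    linarith

theorem indexWeight_eq_sum_mul_add (Λ : Fin d → Fin 2 → ℝ) (α : Fin d → Fin 2) :
    indexWeight Λ α = ∑ i, (Λ i 1 - Λ i 0) * ((α i : ℕ) : ℝ) + ∑ i, Λ i 0 := by
  rw [indexWeight, ← Finset.sum_add_distrib]
  refine Finset.sum_congr rfl fun i _ => ?_
  obtain hi | hi : α i = 0 ∨ α i = 1 := by omega
  · simp [hi]
  · simp [hi]

theorem Separates.isThresholdBF (h : Separates Λ A) : IsThresholdBF A := by
  refine ⟨fun i => Λ i 1 - Λ i 0, coverWeight Λ / 2 - ∑ i, Λ i 0, fun α => ?_⟩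
  rw [h.eq_true_iff_excess_nonneg, excess, indexWeight_eq_sum_mul_add]
  push_cast
  constructor <;> intro <;> linarith

theorem SelfDual.apply_antipode (hA : SelfDual A) (α : Fin d → Fin 2) :
    A (antipode α) = !A α :=
  hA α

theorem SelfDual.exists_separates (hA : SelfDual A) (hT : IsThresholdBF A) :
    ∃ Λ, Separates Λ A := by
  obtain ⟨μ, T, hT⟩ := hT
  let Λ : Fin d → Fin 2 → ℝ := fun i j => μ i * ((j : ℕ) : ℝ)
  have le_iff (α : Fin d → Fin 2) : T ≤ indexWeight Λ α ↔ A α = true := (hT α).symm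
  refine ⟨Λ, fun α hα => ?_, fun α hα => ?_⟩ <;> rw [excess_eq_indexWeight_sub]
  · have h_le : T ≤ indexWeight Λ α := (le_iff α).2 hα
    have h_lt : indexWeight Λ (antipode α) < T := by
      rw [← not_le, le_iff, hA.apply_antipode, hα]
      exact Bool.false_ne_true
    linarith
  · have h_le : T ≤ indexWeight Λ (antipode α) := by
      rw [le_iff, hA.apply_antipode, hα, Bool.not_false]
    have h_lt : indexWeight Λ α < T := by
      rw [← not_le, le_iff, hα]
      exact Bool.false_ne_true
    linarith

theorem hasPolydiagonal_of_antipode {β : Fin d → Fin 2} (hβ : A β = true)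
    (hβ' : A (antipode β) = true) : HasPolydiagonal A := by
  refine ⟨Pi.single β 1 + Pi.single (antipode β) 1, fun α => ?_, fun α hα => ?_, fun i j => ?_⟩
  · simp only [Pi.add_apply, Pi.single_apply]
    positivity
  · have hne : α ≠ β := by grind
    have hne' : α ≠ antipode β := by grind
    simp [hne, hne']
  · have hypSum_pair : hypSum (Pi.single β 1 + Pi.single (antipode β) 1) i j =
        (if β i = j then 1 else 0) + if antipode β i = j then 1 else 0 := by
      simp [hypSum, Finset.sum_add_distrib]
    rw [hypSum_pair, antipode]
    grind

theorem SelfDual.hasPolydiagonal_addEntry (hA : SelfDual A) {β : Fin d → Fin 2}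
    (hβ : A β = false) : HasPolydiagonal (addEntry A β) := by
  have antipode_true : A (antipode β) = true := by rw [hA.apply_antipode, hβ, Bool.not_false]
  apply hasPolydiagonal_of_antipode (β := β) <;> simp [addEntry, antipode_true]

end OrderTwo

/-- Extremal matrices of order 2 are exactly selfdual threshold Boolean functions. -/
theorem stmt_5 {d : ℕ} (A : (Fin d → Fin 2) → Bool) :
    IsExtremal A ↔ (SelfDual A ∧ IsThresholdBF A) := by
  constructor
  · intro hA
    obtain ⟨Λ, hΛ⟩ := hA.exists_separates
    exact ⟨hΛ.selfDual, hΛ.isThresholdBF⟩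
  · rintro ⟨hA, hT⟩
    obtain ⟨Λ, hΛ⟩ := hA.exists_separates hT
    exact ⟨hΛ.not_hasPolydiagonal, fun β hβ => hA.hasPolydiagonal_addEntry hβ⟩
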